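/- arXiv:2006.06293 — 4 statements merged into one kernel-verified Lean document; each statement's English description precedes it below -/
import Mathlib

section
/- Let K be a nonnegative random variable with K > 0 almost surely, E|log K| < ∞, E[log K] < 0, P(K > 1) > 0, and E[K^s] < ∞ for every s > 0. Then there exists β > 0 such that E[K^β] = 1. -/
open MeasureTheory

/-! With `X = log K`, the map `t ↦ E[K ^ t] = E[exp (t X)]` is the moment generating function of
`X`. It equals `1` at `0` and its right derivative there is `E[X] < 0`, so it drops below `1` just
to the right of `0`. Since `P(X > 0) > 0`, it tends to `∞` at `∞`, and it is continuous on `(0, ∞)`,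
so it takes the value `1` again. As `E[exp (t X)]` may be infinite for every `t < 0`, the derivative
at `0` is only one-sided; it is computed by dominated convergence, the difference quotients of a
convex function being monotone. -/

open Filter ProbabilityTheory Set Topology

section

variable {Ω : Type*} [MeasurableSpace Ω] {μ : Measure Ω} {X : Ω → ℝ}

lemma eventually_lt_of_hasDerivWithinAt_Ioi_neg {f : ℝ → ℝ} {f' a : ℝ}
    (hf : HasDerivWithinAt f f' (Ioi a) a) (hf' : f' < 0) : ∀ᶠ t in 𝓝[>] a, f t < f a := by
  have hslope := (hasDerivWithinAt_iff_tendsto_slope' self_notMem_Ioi).1 hf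
  filter_upwards [hslope.eventually_lt_const hf', self_mem_nhdsWithin] with t ht hat
  exact (slope_neg_iff_of_le (mem_Ioi.1 hat).le).1 ht

lemma hasDerivWithinAt_integral_of_convexOn {F : ℝ → Ω → ℝ} {F' : Ω → ℝ} {a b : ℝ} (hab : a < b)
    (hF : ∀ t ∈ Icc a b, Integrable (F t) μ) (hF' : Integrable F' μ)
    (hconv : ∀ᵐ ω ∂μ, ConvexOn ℝ (Icc a b) (F · ω))
    (hderiv : ∀ᵐ ω ∂μ, HasDerivWithinAt (F · ω) (F' ω) (Ioi a) a) :
    HasDerivWithinAt (fun t ↦ ∫ ω, F t ω ∂μ) (∫ ω, F' ω ∂μ) (Ioi a) a := by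
  have ha : a ∈ Icc a b := left_mem_Icc.2 hab.le
  have hb : b ∈ Icc a b := right_mem_Icc.2 hab.le
  have hslope_int : ∀ t ∈ Icc a b, Integrable (fun ω ↦ slope (F · ω) a t) μ := fun t ht ↦
    ((hF t ht).sub (hF a ha)).smul (t - a)⁻¹
  have hnear : ∀ᶠ t in 𝓝[>] a, t ∈ Ioc a b := Ioc_mem_nhdsGT hab
  have hslope_integral : ∀ᶠ t in 𝓝[>] a,
      ∫ ω, slope (F · ω) a t ∂μ = slope (fun t ↦ ∫ ω, F t ω ∂μ) a t := by
    filter_upwards [hnear] with t ht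
    simp only [slope_def_module]
    rw [integral_smul, integral_sub (hF t (Ioc_subset_Icc_self ht)) (hF a ha)]
  rw [hasDerivWithinAt_iff_tendsto_slope' self_notMem_Ioi]
  refine Tendsto.congr' hslope_integral <| tendsto_integral_filter_of_dominated_convergence
    (fun ω ↦ |F' ω| + |slope (F · ω) a b|) ?_ ?_ (hF'.abs.add (hslope_int b hb).abs) ?_
  · filter_upwards [hnear] with t ht
    exact (hslope_int t (Ioc_subset_Icc_self ht)).aestronglyMeasurable
  · filter_upwards [hnear] with t ht
    filter_upwards [hconv, hderiv] with ω hconvω hderivω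
    have htI := Ioc_subset_Icc_self ht
    have hlower : F' ω ≤ slope (F · ω) a t :=
      hconvω.le_slope_of_hasDerivWithinAt_Ioi ha htI ht.1 hderivω
    have hupper : slope (F · ω) a t ≤ slope (F · ω) a b :=
      hconvω.slope_mono ha ⟨htI, ht.1.ne'⟩ ⟨hb, hab.ne'⟩ ht.2
    exact (abs_le_max_abs_abs hlower hupper).trans
      (max_le_add_of_nonneg (abs_nonneg _) (abs_nonneg _))
  · filter_upwards [hderiv] with ω hderivω
    exact (hasDerivWithinAt_iff_tendsto_slope' self_notMem_Ioi).1 hderivω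

lemma hasDerivWithinAt_mgf_Ioi {a b : ℝ} (hab : a < b) (ha : a ∈ integrableExpSet X μ)
    (hb : b ∈ integrableExpSet X μ) (hX : Integrable (fun ω ↦ X ω * Real.exp (a * X ω)) μ) :
    HasDerivWithinAt (mgf X μ) (∫ ω, X ω * Real.exp (a * X ω) ∂μ) (Ioi a) a := by
  refine hasDerivWithinAt_integral_of_convexOn hab
    (fun t ht ↦ convex_integrableExpSet.ordConnected.out ha hb ht) hX
    (.of_forall fun ω ↦ ?_) (.of_forall fun ω ↦ ?_)
  · exact (convexOn_exp.comp_linearMap (LinearMap.toSpanSingleton ℝ ℝ (X ω))).subset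
      (subset_univ _) (convex_Icc a b)
  · simpa only [one_mul, mul_comm (Real.exp _)] using
      ((hasDerivAt_id' a).mul_const (X ω)).exp.hasDerivWithinAt

lemma mul_max_zero_le_exp_mul {t : ℝ} (ht : 0 ≤ t) (x : ℝ) : t * max x 0 ≤ Real.exp (t * x) := by
  rw [mul_max_of_nonneg _ _ ht, mul_zero]
  exact max_le ((lt_add_one _).le.trans (Real.add_one_le_exp _)) (Real.exp_pos _).le

lemma integrable_max_zero_of_mem_integrableExpSet {t : ℝ} (ht : 0 < t)
    (hexp : t ∈ integrableExpSet X μ) : Integrable (fun ω ↦ max (X ω) 0) μ := by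
  have hX : AEMeasurable X μ := Real.aemeasurable_of_aemeasurable_exp_mul ht.ne' hexp.aemeasurable
  refine (hexp.const_mul t⁻¹).mono' (hX.max aemeasurable_const).aestronglyMeasurable
    (.of_forall fun ω ↦ ?_)
  rw [Real.norm_of_nonneg (le_max_right _ _), le_inv_mul_iff₀ ht]
  exact mul_max_zero_le_exp_mul ht.le (X ω)

-- Integrating `t * max X 0 ≤ exp (t * X)` gives a linear lower bound for the moment generating
-- function, with slope `∫ max X 0 > 0`.
lemma tendsto_mgf_atTop (hpos : 0 < μ {ω | 0 < X ω})
    (hexp : ∀ᶠ t in atTop, t ∈ integrableExpSet X μ) : Tendsto (mgf X μ) atTop atTop := by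
  obtain ⟨s, hexp_s, hs⟩ := (hexp.and (eventually_gt_atTop 0)).exists
  have hint := integrable_max_zero_of_mem_integrableExpSet hs hexp_s
  have hintegral_pos : 0 < ∫ ω, max (X ω) 0 ∂μ := by
    rw [integral_pos_iff_support_of_nonneg (fun ω ↦ le_max_right (X ω) 0) hint]
    exact hpos.trans_le (measure_mono fun ω hω ↦ (lt_max_of_lt_left hω).ne')
  refine tendsto_atTop_mono' _ ?_ (tendsto_id.atTop_mul_const hintegral_pos)
  filter_upwards [hexp, eventually_ge_atTop 0] with t hexp_t ht
  calc t * ∫ ω, max (X ω) 0 ∂μ = ∫ ω, t * max (X ω) 0 ∂μ := (integral_const_mul _ _).symm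
    _ ≤ mgf X μ t :=
      integral_mono (hint.const_mul t) hexp_t fun ω ↦ mul_max_zero_le_exp_mul ht (X ω)

lemma exists_pos_mgf_eq_mgf_zero [IsFiniteMeasure μ] (hX : Integrable X μ)
    (hneg : ∫ ω, X ω ∂μ < 0) (hpos : 0 < μ {ω | 0 < X ω}) (hexp : Ioi 0 ⊆ integrableExpSet X μ) :
    ∃ t > 0, mgf X μ t = mgf X μ 0 := by
  have hderiv : HasDerivWithinAt (mgf X μ) (∫ ω, X ω ∂μ) (Ioi 0) 0 := by
    simpa using hasDerivWithinAt_mgf_Ioi one_pos (by simp [integrableExpSet])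
      (hexp (mem_Ioi.2 one_pos)) (by simpa using hX)
  have hbelow : ∀ᶠ t in 𝓝[>] 0, mgf X μ t ≤ mgf X μ 0 :=
    (eventually_lt_of_hasDerivWithinAt_Ioi_neg hderiv hneg).mono fun _ ↦ le_of_lt
  have habove : ∀ᶠ t in atTop, mgf X μ 0 ≤ mgf X μ t :=
    (tendsto_mgf_atTop hpos ((eventually_gt_atTop 0).mono hexp)).eventually_ge_atTop _
  have hcont : ContinuousOn (mgf X μ) (Ioi 0) :=
    continuousOn_mgf.mono (interior_maximal hexp isOpen_Ioi)
  exact isPreconnected_Ioi.intermediate_value₂_eventually₂ (l₁ := 𝓝[>] 0) inf_le_right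
    (le_principal_iff.2 (Ioi_mem_atTop 0)) hcont continuousOn_const hbelow habove

lemma exp_mul_log_ae_eq_rpow {K : Ω → ℝ} (hK : ∀ᵐ ω ∂μ, 0 < K ω) (s : ℝ) :
    (fun ω ↦ Real.exp (s * Real.log (K ω))) =ᵐ[μ] fun ω ↦ K ω ^ s := by
  filter_upwards [hK] with ω hω
  rw [Real.rpow_def_of_pos hω, mul_comm]

end

/-- Let `K ≥ 0` be a random variable with `K > 0` a.s., `E|log K| < ∞`,
`E[log K] < 0`, `P(K > 1) > 0`, and `E[K^s] < ∞` for every `s > 0`. Then there exists `β > 0`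
with `E[K^β] = 1`. -/
theorem stmt_6 {Ω : Type*} [MeasurableSpace Ω] (P : Measure Ω) [IsProbabilityMeasure P]
    (K : Ω → ℝ) (hKm : Measurable K) (hK0 : ∀ ω, 0 ≤ K ω)
    (hKpos : ∀ᵐ ω ∂P, 0 < K ω)
    (hlogint : Integrable (fun ω => Real.log (K ω)) P)
    (hlogneg : ∫ ω, Real.log (K ω) ∂P < 0)
    (hKgt1 : 0 < P {ω | 1 < K ω})
    (hmom : ∀ s : ℝ, 0 < s → Integrable (fun ω => K ω ^ s) P) :
    ∃ β > (0 : ℝ), ∫ ω, K ω ^ β ∂P = 1 := by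
  have hlogpos : 0 < P {ω | 0 < Real.log (K ω)} :=
    hKgt1.trans_le (measure_mono fun _ ↦ Real.log_pos)
  have hexp : Ioi 0 ⊆ integrableExpSet (fun ω ↦ Real.log (K ω)) P := fun s hs ↦
    (hmom s hs).congr (exp_mul_log_ae_eq_rpow hKpos s).symm
  obtain ⟨β, hβ, hmgf⟩ := exists_pos_mgf_eq_mgf_zero hlogint hlogneg hlogpos hexp
  refine ⟨β, hβ, ?_⟩
  calc ∫ ω, K ω ^ β ∂P = mgf (fun ω ↦ Real.log (K ω)) P β :=
        integral_congr_ae (exp_mul_log_ae_eq_rpow hKpos β).symm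
    _ = 1 := hmgf.trans mgf_zero
end

section
/- Let (S, ||·||) be a separable Banach space, Ψ a random Lipschitz function from S to S with random Lipschitz constant K_Ψ, and W a random element of S independent of Ψ such that W has the same distribution as Ψ(W) (a distributional fixed point). Fix w* ∈ S and p ≥ 1, and suppose q := (E[K_Ψ^p])^{1/p} < 1, c := q||w*|| + (E||Ψ(w*)||^p)^{1/p} < ∞, and E||W||^p < ∞. Then (E||W||^p)^{1/p} ≤ κ_p^+ := c/(1−q), and consequently P(||W|| > t) ≤ (κ_p^+)^p t^{−p} for all t > 0. -/
open MeasureTheory ProbabilityTheory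

/-!
Minkowski's inequality applied to `‖Ψ(W)‖ ≤ K (‖W‖ + ‖w*‖) + ‖Ψ(w*)‖`, together with the
independence of `K` and `W`, bounds the `L^p` norm of `Ψ(W)` by `q ‖W‖_p + c`. As `Ψ(W)` has the
law of `W`, this reads `‖W‖_p ≤ q ‖W‖_p + c`, which can be solved for `‖W‖_p` because `q < 1` and
`‖W‖_p` is finite. The tail bound is then Markov's inequality.
-/

open scoped ENNReal

section LpSeminorm

variable {α β E 𝕜 : Type*} [MeasurableSpace α] [MeasurableSpace β] [SeminormedAddCommGroup E]
  {μ : Measure α} {ν : Measure β}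

theorem eLpNorm_prod_mul [NormedDivisionRing 𝕜] [SFinite ν] {f : α → 𝕜} {g : β → 𝕜} {p : ℝ≥0∞}
    (hf : AEStronglyMeasurable f μ) (hg : AEStronglyMeasurable g ν) (hp : p ≠ ∞) :
    eLpNorm (fun x : α × β ↦ f x.1 * g x.2) p (μ.prod ν) = eLpNorm f p μ * eLpNorm g p ν := by
  obtain rfl | hp0 := eq_or_ne p 0
  · simp
  simp only [eLpNorm_eq_lintegral_rpow_enorm_toReal hp0 hp, enorm_mul,
    ENNReal.mul_rpow_of_nonneg _ _ ENNReal.toReal_nonneg]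
  rw [lintegral_prod_mul (hf.enorm.pow_const _) (hg.enorm.pow_const _),
    ENNReal.mul_rpow_of_nonneg _ _ (by positivity)]

theorem eLpNorm_ofReal_of_nonneg {f : α → ℝ} {p : ℝ} (hp : 0 < p) (hf : 0 ≤ᵐ[μ] f)
    (hint : Integrable (fun x ↦ f x ^ p) μ) :
    eLpNorm f (.ofReal p) μ = .ofReal ((∫ x, f x ^ p ∂μ) ^ (1 / p)) := by
  have hpow : 0 ≤ᵐ[μ] fun x ↦ f x ^ p := hf.mono fun x hx ↦ Real.rpow_nonneg hx p
  rw [eLpNorm_eq_lintegral_rpow_enorm_toReal (by simpa using hp) ENNReal.ofReal_ne_top,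
    ENNReal.toReal_ofReal hp.le, ← ENNReal.ofReal_rpow_of_nonneg (integral_nonneg_of_ae hpow)
    (by positivity), ofReal_integral_eq_lintegral_ofReal hint hpow]
  congr 1
  refine lintegral_congr_ae (hf.mono fun x hx ↦ ?_)
  simp only [Real.enorm_of_nonneg hx, ENNReal.ofReal_rpow_of_nonneg hx hp.le]

theorem measure_norm_gt_le_integral_rpow_div {f : α → E} {p t : ℝ} (hp : 0 ≤ p) (ht : 0 < t)
    (hint : Integrable (fun x ↦ ‖f x‖ ^ p) μ) :
    μ {x | t < ‖f x‖} ≤ .ofReal ((∫ x, ‖f x‖ ^ p ∂μ) / t ^ p) := by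
  have htp : 0 < t ^ p := Real.rpow_pos_of_pos ht p
  calc μ {x | t < ‖f x‖} ≤ μ {x | ENNReal.ofReal (t ^ p) ≤ .ofReal (‖f x‖ ^ p)} :=
        measure_mono fun x hx ↦ ENNReal.ofReal_le_ofReal (Real.rpow_le_rpow ht.le hx.le hp)
    _ ≤ (∫⁻ x, .ofReal (‖f x‖ ^ p) ∂μ) / .ofReal (t ^ p) :=
        meas_ge_le_lintegral_div hint.aemeasurable.ennreal_ofReal (by simpa using htp)
          ENNReal.ofReal_ne_top
    _ = .ofReal ((∫ x, ‖f x‖ ^ p ∂μ) / t ^ p) := by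
        rw [ENNReal.ofReal_div_of_pos htp, ofReal_integral_eq_lintegral_ofReal hint
          (ae_of_all _ fun x ↦ by positivity)]

end LpSeminorm

theorem le_div_one_sub_of_le_mul_add {m q c : ℝ≥0∞} (hm : m ≠ ∞) (hq : q < 1)
    (h : m ≤ q * m + c) : m ≤ c / (1 - q) := by
  rw [ENNReal.le_div_iff_mul_le (.inl (tsub_pos_of_lt hq).ne') (.inl (by finiteness)),
    ENNReal.mul_sub fun _ _ ↦ hm, mul_one, tsub_le_iff_left, mul_comm m]
  exact h

theorem norm_apply_le_of_norm_sub_le {E F : Type*} [SeminormedAddCommGroup E]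
    [SeminormedAddCommGroup F] {f : E → F} {L : ℝ} {v w : E} (hL : 0 ≤ L)
    (h : ‖f v - f w‖ ≤ L * ‖v - w‖) : ‖f v‖ ≤ L * (‖v‖ + ‖w‖) + ‖f w‖ :=
  calc ‖f v‖ ≤ ‖f v - f w‖ + ‖f w‖ := norm_le_norm_sub_add _ _
    _ ≤ L * (‖v‖ + ‖w‖) + ‖f w‖ := by
        gcongr
        exact h.trans (by gcongr; exact norm_sub_le v w)

section RandomLipschitz

variable {Ω Ω' S T : Type*} [MeasurableSpace Ω] [MeasurableSpace Ω'] [SeminormedAddCommGroup S]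
  [SeminormedAddCommGroup T] {P : Measure Ω} [IsProbabilityMeasure P] {μ : Measure Ω'}
  [SFinite μ] {K : Ω' → ℝ} {W : Ω → S} {w : S} {p : ℝ≥0∞}

theorem eLpNorm_randomLipschitz_le {Ψ : S × Ω' → T} (hK : AEStronglyMeasurable K μ)
    (hK0 : ∀ᵐ ω' ∂μ, 0 ≤ K ω')
    (hLip : ∀ᵐ ω' ∂μ, ∀ v, ‖Ψ (v, ω') - Ψ (w, ω')‖ ≤ K ω' * ‖v - w‖)
    (hW : AEStronglyMeasurable (fun ω ↦ ‖W ω‖) P)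
    (hΨw : AEStronglyMeasurable (fun ω' ↦ ‖Ψ (w, ω')‖) μ) (hp1 : 1 ≤ p) (hp : p ≠ ∞) :
    eLpNorm (fun x : Ω × Ω' ↦ ‖Ψ (W x.1, x.2)‖) p (P.prod μ) ≤
      eLpNorm K p μ * (eLpNorm (fun ω ↦ ‖W ω‖) p P + ‖w‖ₑ) +
        eLpNorm (fun ω' ↦ ‖Ψ (w, ω')‖) p μ := by
  have hWw : AEStronglyMeasurable (fun ω ↦ ‖W ω‖ + ‖w‖) P := hW.add_const _
  have hpointwise : ∀ᵐ x ∂P.prod μ,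
      ‖‖Ψ (W x.1, x.2)‖‖ ≤ (‖W x.1‖ + ‖w‖) * K x.2 + ‖Ψ (w, x.2)‖ := by
    filter_upwards [Measure.quasiMeasurePreserving_snd.ae (hK0.and hLip)] with x ⟨hKx, hx⟩
    rw [norm_norm, mul_comm]
    exact norm_apply_le_of_norm_sub_le (f := fun v ↦ Ψ (v, x.2)) hKx (hx (W x.1))
  have hshift : eLpNorm (fun ω ↦ ‖W ω‖ + ‖w‖) p P ≤ eLpNorm (fun ω ↦ ‖W ω‖) p P + ‖w‖ₑ := by
    refine (eLpNorm_add_le hW aestronglyMeasurable_const hp1).trans_eq ?_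
    rw [eLpNorm_const _ (one_pos.trans_le hp1).ne' (IsProbabilityMeasure.ne_zero P)]
    simp
  calc eLpNorm (fun x : Ω × Ω' ↦ ‖Ψ (W x.1, x.2)‖) p (P.prod μ)
      ≤ eLpNorm (fun x : Ω × Ω' ↦ (‖W x.1‖ + ‖w‖) * K x.2) p (P.prod μ) +
          eLpNorm (fun x : Ω × Ω' ↦ ‖Ψ (w, x.2)‖) p (P.prod μ) :=
        (eLpNorm_mono_ae_real hpointwise).trans
          (eLpNorm_add_le (hWw.comp_fst.mul hK.comp_snd) hΨw.comp_snd hp1)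
    _ = eLpNorm K p μ * eLpNorm (fun ω ↦ ‖W ω‖ + ‖w‖) p P +
          eLpNorm (fun ω' ↦ ‖Ψ (w, ω')‖) p μ := by
        rw [eLpNorm_prod_mul hWw hK hp, mul_comm]
        congr 1
        exact eLpNorm_comp_measurePreserving hΨw measurePreserving_snd
    _ ≤ _ := by gcongr

theorem eLpNorm_le_of_identDistrib_randomLipschitz [MeasurableSpace S] [OpensMeasurableSpace S]
    {Ψ : S × Ω' → S}
    (hK : AEStronglyMeasurable K μ) (hK0 : ∀ᵐ ω' ∂μ, 0 ≤ K ω')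
    (hLip : ∀ᵐ ω' ∂μ, ∀ v, ‖Ψ (v, ω') - Ψ (w, ω')‖ ≤ K ω' * ‖v - w‖)
    (hfix : IdentDistrib (fun x : Ω × Ω' ↦ Ψ (W x.1, x.2)) W (P.prod μ) P)
    (hΨw : AEStronglyMeasurable (fun ω' ↦ ‖Ψ (w, ω')‖) μ) (hp1 : 1 ≤ p) (hp : p ≠ ∞)
    (hWp : eLpNorm (fun ω ↦ ‖W ω‖) p P ≠ ∞) (hKp : eLpNorm K p μ < 1) :
    eLpNorm (fun ω ↦ ‖W ω‖) p P ≤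
      (eLpNorm K p μ * ‖w‖ₑ + eLpNorm (fun ω' ↦ ‖Ψ (w, ω')‖) p μ) / (1 - eLpNorm K p μ) := by
  refine le_div_one_sub_of_le_mul_add hWp hKp ?_
  have hnorm := hfix.comp continuous_norm.measurable
  calc eLpNorm (fun ω ↦ ‖W ω‖) p P
      = eLpNorm (fun x : Ω × Ω' ↦ ‖Ψ (W x.1, x.2)‖) p (P.prod μ) := (hnorm.eLpNorm_eq p).symm
    _ ≤ _ := eLpNorm_randomLipschitz_le hK hK0 hLip
        hnorm.aemeasurable_snd.aestronglyMeasurable hΨw hp1 hp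
    _ = _ := by rw [mul_add, add_assoc]

theorem integral_norm_rpow_le_of_identDistrib_randomLipschitz [MeasurableSpace S]
    [OpensMeasurableSpace S] {Ψ : S × Ω' → S} {p : ℝ}
    (hK : AEStronglyMeasurable K μ) (hK0 : ∀ᵐ ω' ∂μ, 0 ≤ K ω')
    (hLip : ∀ᵐ ω' ∂μ, ∀ v, ‖Ψ (v, ω') - Ψ (w, ω')‖ ≤ K ω' * ‖v - w‖)
    (hfix : IdentDistrib (fun x : Ω × Ω' ↦ Ψ (W x.1, x.2)) W (P.prod μ) P)
    (hΨw : AEStronglyMeasurable (fun ω' ↦ ‖Ψ (w, ω')‖) μ) (hp : 1 ≤ p)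
    (hKint : Integrable (fun ω' ↦ K ω' ^ p) μ)
    (hΨint : Integrable (fun ω' ↦ ‖Ψ (w, ω')‖ ^ p) μ)
    (hWint : Integrable (fun ω ↦ ‖W ω‖ ^ p) P)
    (hq : (∫ ω', K ω' ^ p ∂μ) ^ (1 / p) < 1) :
    (∫ ω, ‖W ω‖ ^ p ∂P) ^ (1 / p) ≤
      ((∫ ω', K ω' ^ p ∂μ) ^ (1 / p) * ‖w‖ + (∫ ω', ‖Ψ (w, ω')‖ ^ p ∂μ) ^ (1 / p)) /
        (1 - (∫ ω', K ω' ^ p ∂μ) ^ (1 / p)) := by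
  have hp0 : 0 < p := one_pos.trans_le hp
  have hKq := eLpNorm_ofReal_of_nonneg hp0 hK0 hKint
  have hWm := eLpNorm_ofReal_of_nonneg hp0 (ae_of_all _ fun ω ↦ norm_nonneg (W ω)) hWint
  have hΨd := eLpNorm_ofReal_of_nonneg hp0 (ae_of_all _ fun ω' ↦ norm_nonneg (Ψ (w, ω'))) hΨint
  have hbound := eLpNorm_le_of_identDistrib_randomLipschitz hK hK0 hLip hfix hΨw
    (ENNReal.one_le_ofReal.mpr hp) ENNReal.ofReal_ne_top (hWm ▸ ENNReal.ofReal_ne_top)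
    (hKq ▸ ENNReal.ofReal_lt_one.mpr hq)
  have hq0 : 0 ≤ (∫ ω', K ω' ^ p ∂μ) ^ (1 / p) :=
    Real.rpow_nonneg (integral_nonneg_of_ae (hK0.mono fun ω' h ↦ Real.rpow_nonneg h p)) _
  have hq1 := sub_pos.mpr hq
  rwa [hKq, hWm, hΨd, ← ofReal_norm, ← ENNReal.ofReal_mul hq0,
    ← ENNReal.ofReal_add (by positivity) (by positivity), ← ENNReal.ofReal_one,
    ← ENNReal.ofReal_sub _ hq0, ← ENNReal.ofReal_div_of_pos hq1,
    ENNReal.ofReal_le_ofReal_iff (by positivity)] at hbound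

end RandomLipschitz

theorem stmt_10_general {Ω Ω' S : Type*} [MeasurableSpace Ω] [MeasurableSpace Ω']
    [SeminormedAddCommGroup S] [MeasurableSpace S] [OpensMeasurableSpace S]
    (P : Measure Ω) [IsProbabilityMeasure P] (μ : Measure Ω') [IsProbabilityMeasure μ]
    (Ψ : S × Ω' → S) (hΨ : Measurable Ψ)
    (K : Ω' → ℝ) (hKm : Measurable K) (hK0 : ∀ ω', 0 ≤ K ω') (w : S)
    (hLip : ∀ᵐ ω' ∂μ, ∀ v : S, ‖Ψ (v, ω') - Ψ (w, ω')‖ ≤ K ω' * ‖v - w‖)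
    (W : Ω → S) (hWm : Measurable W)
    (hfix : Measure.map (fun x : Ω × Ω' ↦ Ψ (W x.1, x.2)) (P.prod μ) = Measure.map W P)
    (p : ℝ) (hp : 1 ≤ p)
    (hKint : Integrable (fun ω' ↦ K ω' ^ p) μ)
    (hΨint : Integrable (fun ω' ↦ ‖Ψ (w, ω')‖ ^ p) μ)
    (hWint : Integrable (fun ω ↦ ‖W ω‖ ^ p) P)
    (q c : ℝ)
    (hq : q = (∫ ω', K ω' ^ p ∂μ) ^ (1 / p)) (hq1 : q < 1)
    (hc : c = q * ‖w‖ + (∫ ω', ‖Ψ (w, ω')‖ ^ p ∂μ) ^ (1 / p)) :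
    (∫ ω, ‖W ω‖ ^ p ∂P) ^ (1 / p) ≤ c / (1 - q) ∧
    ∀ t : ℝ, 0 < t →
      P {ω | t < ‖W ω‖} ≤ ENNReal.ofReal ((c / (1 - q)) ^ p / t ^ p) := by
  have hp0 : 0 < p := one_pos.trans_le hp
  have hΨw : Measurable fun ω' ↦ ‖Ψ (w, ω')‖ :=
    continuous_norm.measurable.comp (hΨ.comp measurable_prodMk_left)
  have hmoment : (∫ ω, ‖W ω‖ ^ p ∂P) ^ (1 / p) ≤ c / (1 - q) := by
    subst hc hq
    exact integral_norm_rpow_le_of_identDistrib_randomLipschitz hKm.aestronglyMeasurable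
      (ae_of_all _ hK0) hLip ⟨by fun_prop, hWm.aemeasurable, hfix⟩ hΨw.aestronglyMeasurable hp
      hKint hΨint hWint hq1
  refine ⟨hmoment, fun t ht ↦ (measure_norm_gt_le_integral_rpow_div hp0.le ht hWint).trans ?_⟩
  have hmoment_rpow : ∫ ω, ‖W ω‖ ^ p ∂P ≤ (c / (1 - q)) ^ p := by
    rw [one_div] at hmoment
    have hκ : 0 ≤ c / (1 - q) := le_trans (by positivity) hmoment
    exact (Real.rpow_inv_le_iff_of_pos (by positivity) hκ hp0).mp hmoment
  gcongr

/-- (Moment and tail bound at a distributional fixed point.) Let `S` be a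
separable Banach space, `Ψ(·, ω')` a random Lipschitz function with random Lipschitz constant
`K(ω')` (noise `ω' ~ μ`), and `W` a random element of `S`, independent of `Ψ` (encoded via the
product measure `P ⊗ μ`), such that `Ψ(W)` has the same distribution as `W`. Fix `w* ∈ S`,
`p ≥ 1`, and suppose `q := (E[K^p])^{1/p} < 1`, `c := q ‖w*‖ + (E‖Ψ(w*)‖^p)^{1/p} < ∞` and
`E‖W‖^p < ∞`. Then `(E‖W‖^p)^{1/p} ≤ κ⁺ := c/(1-q)` and consequently
`P(‖W‖ > t) ≤ (κ⁺)^p t^{-p}` for all `t > 0`. -/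
theorem stmt_10 {Ω Ω' S : Type*} [MeasurableSpace Ω] [MeasurableSpace Ω']
    [NormedAddCommGroup S] [NormedSpace ℝ S] [CompleteSpace S]
    [TopologicalSpace.SeparableSpace S] [MeasurableSpace S] [BorelSpace S]
    (P : Measure Ω) [IsProbabilityMeasure P] (μ : Measure Ω') [IsProbabilityMeasure μ]
    (Ψ : S × Ω' → S) (hΨ : Measurable Ψ)
    (K : Ω' → ℝ) (hKm : Measurable K) (hK0 : ∀ ω', 0 ≤ K ω')
    (hLip : ∀ᵐ ω' ∂μ, ∀ v w : S, ‖Ψ (v, ω') - Ψ (w, ω')‖ ≤ K ω' * ‖v - w‖)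
    (W : Ω → S) (hWm : Measurable W)
    (hfix : Measure.map (fun x : Ω × Ω' => Ψ (W x.1, x.2)) (P.prod μ) = Measure.map W P)
    (wst : S) (p : ℝ) (hp : 1 ≤ p)
    (hKint : Integrable (fun ω' => K ω' ^ p) μ)
    (hΨint : Integrable (fun ω' => ‖Ψ (wst, ω')‖ ^ p) μ)
    (hWint : Integrable (fun ω => ‖W ω‖ ^ p) P)
    (q c : ℝ)
    (hq : q = (∫ ω', K ω' ^ p ∂μ) ^ (1 / p)) (hq1 : q < 1)
    (hc : c = q * ‖wst‖ + (∫ ω', ‖Ψ (wst, ω')‖ ^ p ∂μ) ^ (1 / p)) :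
    (∫ ω, ‖W ω‖ ^ p ∂P) ^ (1 / p) ≤ c / (1 - q) ∧
    ∀ t : ℝ, 0 < t →
      P {ω | t < ‖W ω‖} ≤ ENNReal.ofReal ((c / (1 - q)) ^ p / t ^ p) :=
  stmt_10_general P μ Ψ hΨ K hKm hK0 wst (hLip.mono fun _ h v ↦ h v wst) W hWm hfix p hp
    hKint hΨint hWint q c hq hq1 hc
end

section
/- Let f : [0,∞) → R be a non-decreasing function that is unbounded above. Suppose there exist constants a ≥ c > 1 and b, x ≥ 0 and t_0 ≥ x such that f(ct) ≥ a f(t − x) − b for all t ≥ t_0. Then for every γ with 0 < γ < (log a)/(log c), liminf_{t→∞} t^{−γ} f(t) > 0. -/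
/-!
For `K` and `B` large enough, `g u = f (u - K) - B` satisfies the homogeneous inequality
`a * g u ≤ g (c * u)`: the translation by `K` absorbs the shift `x`, and the subtraction of `B`
absorbs the defect `b`. Iterating gives `a ^ n * g s ≤ g (c ^ n * s)`, and since
`a ^ n = (c ^ n) ^ logb c a`, monotonicity between consecutive points `c ^ n * s` makes `g`, hence
`f`, grow at least like `t ^ logb c a`.
-/

open Filter Set

theorem tendsto_atTop_of_monotoneOn_Ici {α β : Type*} [Preorder α] [Preorder β] {f : α → β}
    {r : α} (hf : MonotoneOn f (Ici r)) (hunb : ∀ M, ∃ t, r ≤ t ∧ M ≤ f t) :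
    Tendsto f atTop atTop := by
  refine tendsto_atTop.2 fun M => ?_
  obtain ⟨t, hrt, hMt⟩ := hunb M
  filter_upwards [eventually_ge_atTop t] with u htu
  exact hMt.trans (hf hrt (hrt.trans htu) htu)

theorem pow_mul_le_of_mul_le_comp_mul {R S : Type*} [Semiring R] [PartialOrder R]
    [IsOrderedRing R] [Semiring S] [PartialOrder S] [IsOrderedRing S] {g : R → S} {a : S} {c s : R}
    (ha : 0 ≤ a) (hc : 1 ≤ c) (hs : 0 ≤ s) (hg : ∀ u, s ≤ u → a * g u ≤ g (c * u)) (n : ℕ) :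
    a ^ n * g s ≤ g (c ^ n * s) := by
  induction n with
  | zero => simp
  | succ n ih =>
    calc a ^ (n + 1) * g s = a * (a ^ n * g s) := by rw [pow_succ', mul_assoc]
      _ ≤ a * g (c ^ n * s) := mul_le_mul_of_nonneg_left ih ha
      _ ≤ g (c * (c ^ n * s)) := hg _ (le_mul_of_one_le_left hs (one_le_pow₀ hc))
      _ = g (c ^ (n + 1) * s) := by rw [pow_succ', mul_assoc]

theorem pow_rpow_logb {a c : ℝ} (ha : 0 < a) (hc : 0 < c) (hc₁ : c ≠ 1) (n : ℕ) :
    (c ^ n) ^ Real.logb c a = a ^ n := by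
  rw [← Real.rpow_pow_comm hc.le, Real.rpow_logb hc hc₁ ha]

section Scaling

variable {g : ℝ → ℝ} {a c : ℝ}

theorem mul_div_rpow_logb_le {s t : ℝ} (ha : 1 ≤ a) (hc : 1 < c) (hs : 0 < s)
    (hmono : MonotoneOn g (Ici s)) (hgs : 0 ≤ g s) (hg : ∀ u, s ≤ u → a * g u ≤ g (c * u))
    (hst : s ≤ t) : g s * (t / (c * s)) ^ Real.logb c a ≤ g t := by
  have ha₀ : 0 < a := one_pos.trans_le ha
  have hc₀ : 0 < c := one_pos.trans hc
  obtain ⟨n, hle, hlt⟩ := exists_nat_pow_near ((one_le_div hs).2 hst) hc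
  have hdiv : t / (c * s) ≤ c ^ n := by
    rw [div_lt_iff₀ hs, pow_succ, mul_assoc] at hlt
    exact (div_le_iff₀ (mul_pos hc₀ hs)).2 hlt.le
  have hs_le : s ≤ c ^ n * s := le_mul_of_one_le_left hs.le (one_le_pow₀ hc.le)
  calc g s * (t / (c * s)) ^ Real.logb c a
      ≤ g s * (c ^ n) ^ Real.logb c a := by
        gcongr
        · exact div_nonneg (hs.le.trans hst) (mul_pos hc₀ hs).le
        · exact Real.logb_nonneg hc ha
    _ = a ^ n * g s := by rw [pow_rpow_logb ha₀ hc₀ hc.ne', mul_comm]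
    _ ≤ g (c ^ n * s) := pow_mul_le_of_mul_le_comp_mul ha₀.le hc.le hs.le hg n
    _ ≤ g t := hmono hs_le hst ((le_div_iff₀ hs).1 hle)

theorem exists_eventually_mul_rpow_logb_le {r : ℝ} (ha : 1 ≤ a) (hc : 1 < c)
    (hmono : MonotoneOn g (Ici r)) (hpos : ∀ᶠ u in atTop, 0 < g u)
    (hg : ∀ᶠ u in atTop, a * g u ≤ g (c * u)) :
    ∃ δ > 0, ∀ᶠ t in atTop, δ * t ^ Real.logb c a ≤ g t := by
  obtain ⟨s, ⟨⟨hgs, hrs⟩, hs⟩, hscale⟩ :=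
    (((hpos.and (eventually_ge_atTop r)).and (eventually_gt_atTop 0)).and
      (eventually_forall_ge_atTop.2 hg)).exists
  have hcs : 0 < c * s := mul_pos (one_pos.trans hc) hs
  refine ⟨g s / (c * s) ^ Real.logb c a, by positivity, ?_⟩
  filter_upwards [eventually_ge_atTop s] with t hst
  calc g s / (c * s) ^ Real.logb c a * t ^ Real.logb c a
      = g s * (t / (c * s)) ^ Real.logb c a := by
        rw [Real.div_rpow (hs.le.trans hst) hcs.le, div_mul_eq_mul_div, mul_div_assoc]
    _ ≤ g t := mul_div_rpow_logb_le ha hc hs (hmono.mono (Ici_subset_Ici.2 hrs)) hgs.le hscale hst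

end Scaling

section Recurrence

variable {f : ℝ → ℝ} {a b c r x : ℝ}

theorem eventually_mul_comp_sub_le {B K : ℝ} (hc : 0 < c) (hmono : MonotoneOn f (Ici r))
    (hrec : ∀ᶠ t in atTop, a * f (t - x) - b ≤ f (c * t)) (hK : c * x ≤ (c - 1) * K)
    (hB : b ≤ (a - 1) * B) :
    ∀ᶠ u in atTop, a * (f (u - K) - B) ≤ f (c * u - K) - B := by
  have htranslate : Tendsto (fun u : ℝ => u + (x - K)) atTop atTop :=
    tendsto_atTop_add_const_right _ _ tendsto_id
  filter_upwards [htranslate.eventually hrec,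
    (htranslate.const_mul_atTop hc).eventually_ge_atTop r] with u hu hru
  have harg : c * (u + (x - K)) ≤ c * u - K := by linarith
  have hf : f (c * (u + (x - K))) ≤ f (c * u - K) := hmono hru (hru.trans harg) harg
  rw [show u + (x - K) - x = u - K by ring] at hu
  linarith

theorem exists_eventually_mul_rpow_logb_le_of_recurrence (ha : 1 < a) (hc : 1 < c)
    (hmono : MonotoneOn f (Ici r)) (htop : Tendsto f atTop atTop)
    (hrec : ∀ᶠ t in atTop, a * f (t - x) - b ≤ f (c * t)) :
    ∃ δ > 0, ∀ᶠ t in atTop, δ * t ^ Real.logb c a ≤ f t := by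
  have ha₁ : 0 < a - 1 := sub_pos.2 ha
  have hc₁ : 0 < c - 1 := sub_pos.2 hc
  obtain ⟨K, hK₀, hK⟩ : ∃ K, 0 ≤ K ∧ c * x ≤ (c - 1) * K :=
    ⟨|c * x| / (c - 1), by positivity, by rw [mul_div_cancel₀ _ hc₁.ne']; exact le_abs_self _⟩
  obtain ⟨B, hB₀, hB⟩ : ∃ B, 0 ≤ B ∧ b ≤ (a - 1) * B :=
    ⟨|b| / (a - 1), by positivity, by rw [mul_div_cancel₀ _ ha₁.ne']; exact le_abs_self _⟩
  have hshift_mono : MonotoneOn (fun u => f (u - K) - B) (Ici (r + K)) := by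
    intro u hu v hv huv
    have hf : f (u - K) ≤ f (v - K) := hmono (mem_Ici.2 (le_sub_iff_add_le.2 hu))
      (mem_Ici.2 (le_sub_iff_add_le.2 hv)) (sub_le_sub_right huv K)
    exact sub_le_sub_right hf B
  have hshift_pos : ∀ᶠ u in atTop, 0 < f (u - K) - B :=
    ((htop.comp (tendsto_atTop_add_const_right _ (-K) tendsto_id)).eventually_gt_atTop B).mono
      fun _ => sub_pos.2
  obtain ⟨δ, hδ, hbound⟩ := exists_eventually_mul_rpow_logb_le ha.le hc hshift_mono hshift_pos
    (eventually_mul_comp_sub_le (one_pos.trans hc) hmono hrec hK hB)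
  refine ⟨δ, hδ, ?_⟩
  filter_upwards [(tendsto_atTop_add_const_right _ K tendsto_id).eventually hbound,
    eventually_ge_atTop 0] with t ht ht₀
  calc δ * t ^ Real.logb c a ≤ δ * (t + K) ^ Real.logb c a := by
        gcongr
        · exact Real.logb_nonneg hc ha.le
        · exact le_add_of_nonneg_right hK₀
    _ ≤ f (t + K - K) - B := ht
    _ ≤ f t := by rw [add_sub_cancel_right]; exact sub_le_self _ hB₀

end Recurrence

theorem stmt_13_general (f : ℝ → ℝ) (hmono : MonotoneOn f (Ici (0 : ℝ)))
    (hunb : ∀ M : ℝ, ∃ t : ℝ, 0 ≤ t ∧ M < f t) (a c b x : ℝ) (ha : 1 < a) (hc : 1 < c)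
    (hrec : ∀ᶠ t in atTop, a * f (t - x) - b ≤ f (c * t)) :
    ∀ γ : ℝ, γ ≤ Real.log a / Real.log c →
      ∃ δ > (0 : ℝ), ∃ T > (0 : ℝ), ∀ t : ℝ, T ≤ t → δ * t ^ γ ≤ f t := by
  intro γ hγ
  have htop : Tendsto f atTop atTop :=
    tendsto_atTop_of_monotoneOn_Ici hmono fun M => (hunb M).imp fun _ => And.imp_right le_of_lt
  obtain ⟨δ, hδ, hbound⟩ :=
    exists_eventually_mul_rpow_logb_le_of_recurrence ha hc hmono htop hrec
  obtain ⟨T, hT, hT₁⟩ :=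
    ((eventually_forall_ge_atTop.2 hbound).and (eventually_ge_atTop 1)).exists
  refine ⟨δ, hδ, T, one_pos.trans_le hT₁, fun t ht => ?_⟩
  have hexp : t ^ γ ≤ t ^ Real.logb c a := Real.rpow_le_rpow_of_exponent_le (hT₁.trans ht) hγ
  exact (mul_le_mul_of_nonneg_left hexp hδ.le).trans (hT t ht)

/-- Let `f : [0,∞) → ℝ` be non-decreasing and unbounded above. If there are
constants `a ≥ c > 1`, `b, x ≥ 0` and `t₀ ≥ x` such that `f (c t) ≥ a f (t - x) - b` for all
`t ≥ t₀`, then for every `0 < γ < log a / log c` we have `liminf_{t → ∞} t^(-γ) f t > 0`,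
i.e. there are `δ > 0` and `T > 0` with `f t ≥ δ t^γ` for all `t ≥ T`. -/
theorem stmt_13 (f : ℝ → ℝ)
    (hmono : MonotoneOn f (Set.Ici (0 : ℝ)))
    (hunb : ∀ M : ℝ, ∃ t : ℝ, 0 ≤ t ∧ M < f t)
    (a c b x t₀ : ℝ) (hac : c ≤ a) (hc : 1 < c) (hb : 0 ≤ b) (hx : 0 ≤ x) (ht₀ : x ≤ t₀)
    (hrec : ∀ t : ℝ, t₀ ≤ t → a * f (t - x) - b ≤ f (c * t)) :
    ∀ γ : ℝ, 0 < γ → γ < Real.log a / Real.log c →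
      ∃ δ > (0 : ℝ), ∃ T > (0 : ℝ), ∀ t : ℝ, T ≤ t → δ * t ^ γ ≤ f t :=
  fun γ _ hγ => stmt_13_general f hmono hunb a c b x (hc.trans_le hac) hc
    (eventually_atTop.2 ⟨t₀, hrec⟩) γ hγ.le
end

section
/- Let X be a nonnegative random variable and let 0 < γ < α. If liminf_{t→∞} t^{−γ} E[X^α · 1_{X ≤ t}] > 0, then there exist constants C > 0 and t_0 > 0 such that P(X ≥ t) ≥ C t^{−(α/γ)(α−γ)} for all t ≥ t_0. -/
open MeasureTheory

/-!
Write `A t` for the integral of `X ^ α` over `{X ≤ t}`. Splitting at a level `t` gives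
`A s ≤ A t + s ^ α * μ {X > t}`. If some tail of `X` has finite measure, the same inequality with
`s` and `t` exchanged and `s` fixed shows that `A t ≤ M * t ^ α` for large `t`. Since
`A s ≥ κ * s ^ γ`, the choice of `s` of order `t ^ (α / γ)` for which `κ * s ^ γ = 2 * M * t ^ α`
makes the tail term `s ^ α * μ {X > t}` at least `M * t ^ α`.
-/

section TruncatedMoment

open Filter

variable {Ω : Type*} [MeasurableSpace Ω] {μ : Measure Ω} {X : Ω → ℝ} {α β γ κ M s t : ℝ}

/-- The truncated moment `E[X ^ α; X ≤ t]`, as a Lebesgue integral: it is `∞` where the Bochner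
integral would be `0` by convention. -/
noncomputable def truncatedMoment (μ : Measure Ω) (X : Ω → ℝ) (α t : ℝ) : ENNReal :=
  ∫⁻ ω in {ω | X ω ≤ t}, ENNReal.ofReal (X ω ^ α) ∂μ

lemma ofReal_setIntegral_rpow_eq_truncatedMoment (hX : 0 ≤ᵐ[μ] X)
    (h : ∫ ω in {ω | X ω ≤ t}, X ω ^ α ∂μ ≠ 0) :
    ENNReal.ofReal (∫ ω in {ω | X ω ≤ t}, X ω ^ α ∂μ) = truncatedMoment μ X α t :=
  ofReal_integral_eq_lintegral_ofReal (Integrable.of_integral_ne_zero h) <|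
    ae_restrict_of_ae <| hX.mono fun _ hω => Real.rpow_nonneg hω α

lemma truncatedMoment_le_add_mul_measure_lt (hX : 0 ≤ᵐ[μ] X) (hα : 0 ≤ α) (s t : ℝ) :
    truncatedMoment μ X α s ≤
      truncatedMoment μ X α t + ENNReal.ofReal (s ^ α) * μ {ω | t < X ω} := by
  have hcover : {ω | X ω ≤ s} ⊆ {ω | X ω ≤ t} ∪ {ω | t < X ω ∧ X ω ≤ s} := fun ω hω =>
    (le_or_gt (X ω) t).imp id fun h => ⟨h, hω⟩
  have hupper : ∫⁻ ω in {ω | t < X ω ∧ X ω ≤ s}, ENNReal.ofReal (X ω ^ α) ∂μ ≤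
      ENNReal.ofReal (s ^ α) * μ {ω | t < X ω} :=
    calc
      _ ≤ ∫⁻ _ in {ω | t < X ω ∧ X ω ≤ s}, ENNReal.ofReal (s ^ α) ∂μ :=
        setLIntegral_mono_ae aemeasurable_const <| hX.mono fun _ h0 h =>
          ENNReal.ofReal_le_ofReal (Real.rpow_le_rpow h0 h.2 hα)
      _ = ENNReal.ofReal (s ^ α) * μ {ω | t < X ω ∧ X ω ≤ s} := setLIntegral_const _ _
      _ ≤ ENNReal.ofReal (s ^ α) * μ {ω | t < X ω} := by gcongr; exact And.left
  exact (lintegral_mono_set hcover).trans <|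
    (lintegral_union_le _ _ _).trans (add_le_add_right hupper _)

lemma exists_truncatedMoment_le_mul_rpow (hX : 0 ≤ᵐ[μ] X) (hα : 0 ≤ α)
    (hmoment : truncatedMoment μ X α s ≠ ⊤) (htail : μ {ω | s < X ω} ≠ ⊤) :
    ∃ M > (0 : ℝ), ∀ t : ℝ, 1 ≤ t → truncatedMoment μ X α t ≤ ENNReal.ofReal (M * t ^ α) := by
  set A := truncatedMoment μ X α s
  set p := μ {ω | s < X ω}
  refine ⟨A.toReal + p.toReal + 1, by positivity, fun t ht => ?_⟩
  have hone : 1 ≤ t ^ α := Real.one_le_rpow ht hα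
  calc
    truncatedMoment μ X α t ≤ A + ENNReal.ofReal (t ^ α) * p :=
      truncatedMoment_le_add_mul_measure_lt hX hα t s
    _ = ENNReal.ofReal (A.toReal + t ^ α * p.toReal) := by
      rw [ENNReal.ofReal_add (by positivity) (by positivity), ENNReal.ofReal_mul (by positivity),
        ENNReal.ofReal_toReal hmoment, ENNReal.ofReal_toReal htail]
    _ ≤ ENNReal.ofReal ((A.toReal + p.toReal + 1) * t ^ α) := by
      gcongr
      linarith [le_mul_of_one_le_right A.toReal_nonneg hone]

lemma ofReal_div_rpow_le_measure_lt (hX : 0 ≤ᵐ[μ] X) (hα : 0 ≤ α) (hs : 0 < s) {a : ℝ}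
    (ha : 0 ≤ a) (hupper : truncatedMoment μ X α t ≤ ENNReal.ofReal a)
    (hlower : ENNReal.ofReal (2 * a) ≤ truncatedMoment μ X α s) :
    ENNReal.ofReal (a / s ^ α) ≤ μ {ω | t < X ω} := by
  have hsplit : ENNReal.ofReal a + ENNReal.ofReal a ≤
      ENNReal.ofReal a + ENNReal.ofReal (s ^ α) * μ {ω | t < X ω} :=
    calc
      ENNReal.ofReal a + ENNReal.ofReal a = ENNReal.ofReal (2 * a) := by
        rw [← ENNReal.ofReal_add ha ha, two_mul]
      _ ≤ truncatedMoment μ X α t + ENNReal.ofReal (s ^ α) * μ {ω | t < X ω} :=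
        hlower.trans (truncatedMoment_le_add_mul_measure_lt hX hα s t)
      _ ≤ _ := add_le_add_left hupper _
  rw [ENNReal.ofReal_div_of_pos (by positivity)]
  exact ENNReal.div_le_of_le_mul' (ENNReal.le_of_add_le_add_left ENNReal.ofReal_ne_top hsplit)

theorem exists_eventually_rpow_le_measure_lt (hX : 0 ≤ᵐ[μ] X) (hα : 0 ≤ α) (hβ : 0 < β)
    (hγ : 0 < γ) (hκ : 0 < κ) (hM : 0 < M)
    (hupper : ∀ᶠ t in atTop, truncatedMoment μ X α t ≤ ENNReal.ofReal (M * t ^ β))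
    (hlower : ∀ᶠ t in atTop, ENNReal.ofReal (κ * t ^ γ) ≤ truncatedMoment μ X α t) :
    ∃ C > (0 : ℝ), ∀ᶠ t in atTop,
      ENNReal.ofReal (C * t ^ (-(β / γ) * (α - γ))) ≤ μ {ω | t < X ω} := by
  set K : ℝ := (2 * M / κ) ^ γ⁻¹
  have hK_pos : 0 < K := by positivity
  have hK_rpow : K ^ γ = 2 * M / κ := Real.rpow_inv_rpow (by positivity) hγ.ne'
  have hscale : Tendsto (fun t : ℝ => K * t ^ (β / γ)) atTop atTop :=
    (tendsto_rpow_atTop (div_pos hβ hγ)).const_mul_atTop hK_pos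
  refine ⟨M / K ^ α, by positivity, ?_⟩
  filter_upwards [hupper, hscale.eventually hlower, eventually_gt_atTop 0] with t hup hlow ht
  have hbalance : κ * (K * t ^ (β / γ)) ^ γ = 2 * (M * t ^ β) := by
    rw [Real.mul_rpow hK_pos.le (by positivity), hK_rpow, ← Real.rpow_mul ht.le,
      div_mul_cancel₀ _ hγ.ne']
    field_simp
  have hrate : M / K ^ α * t ^ (-(β / γ) * (α - γ)) = M * t ^ β / (K * t ^ (β / γ)) ^ α := by
    rw [Real.mul_rpow hK_pos.le (by positivity), ← Real.rpow_mul ht.le,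
      show -(β / γ) * (α - γ) = β - β / γ * α by field_simp; ring, Real.rpow_sub ht,
      div_mul_div_comm]
  rw [hrate]
  exact ofReal_div_rpow_le_measure_lt hX hα (by positivity) (by positivity) hup (hbalance ▸ hlow)

theorem stmt_14_general (hX : 0 ≤ᵐ[μ] X) (hα : 0 < α) (hγ : 0 < γ) (hκ : 0 < κ) {T : ℝ}
    (hliminf : ∀ t : ℝ, T ≤ t → κ ≤ t ^ (-γ) * ∫ ω in {ω | X ω ≤ t}, X ω ^ α ∂μ) :
    ∃ C > (0 : ℝ), ∃ t₀ > (0 : ℝ), ∀ t : ℝ, t₀ ≤ t →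
      ENNReal.ofReal (C * t ^ (-(α / γ) * (α - γ))) ≤ μ {ω | t ≤ X ω} := by
  suffices h : ∃ C > (0 : ℝ), ∀ᶠ t in atTop,
      ENNReal.ofReal (C * t ^ (-(α / γ) * (α - γ))) ≤ μ {ω | t < X ω} by
    obtain ⟨C, hC, hbound⟩ := h
    obtain ⟨t₀, ht₀⟩ := eventually_atTop.1 (hbound.and (eventually_gt_atTop 0))
    exact ⟨C, hC, t₀, (ht₀ t₀ le_rfl).2, fun t ht =>
      (ht₀ t ht).1.trans (measure_mono fun ω (hω : t < X ω) => hω.le)⟩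
  have hmoment (t : ℝ) (ht : T ≤ t) :
      ENNReal.ofReal (∫ ω in {ω | X ω ≤ t}, X ω ^ α ∂μ) = truncatedMoment μ X α t :=
    ofReal_setIntegral_rpow_eq_truncatedMoment hX
      (right_ne_zero_of_mul (hκ.trans_le (hliminf t ht)).ne')
  by_cases htail : ∃ s ≥ T, μ {ω | s < X ω} ≠ ⊤
  · obtain ⟨s, hs, hfinite⟩ := htail
    obtain ⟨M, hM, hupper⟩ := exists_truncatedMoment_le_mul_rpow hX hα.le
      (hmoment s hs ▸ ENNReal.ofReal_ne_top) hfinite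
    refine exists_eventually_rpow_le_measure_lt hX hα.le hα hγ hκ hM
      ((eventually_ge_atTop 1).mono hupper) ?_
    filter_upwards [eventually_ge_atTop T, eventually_gt_atTop 0] with t hT ht
    rw [← hmoment t hT]
    have hgrowth := hliminf t hT
    rw [Real.rpow_neg ht.le, ← div_eq_inv_mul, le_div_iff₀ (by positivity)] at hgrowth
    exact ENNReal.ofReal_le_ofReal hgrowth
  · push Not at htail
    exact ⟨1, one_pos, (eventually_ge_atTop T).mono fun t ht => htail t ht ▸ le_top⟩

end TruncatedMoment

/-- Let `X ≥ 0` be a random variable and `0 < γ < α`. If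
`liminf_{t→∞} t^(-γ) E[X^α 1_{X ≤ t}] > 0` (i.e. the truncated moment is eventually bounded
below by `κ t^γ` for some `κ > 0`), then there are `C > 0` and `t₀ > 0` such that
`P(X ≥ t) ≥ C t^(-(α/γ)(α-γ))` for all `t ≥ t₀`. -/
theorem stmt_14 {Ω : Type*} [MeasurableSpace Ω] (P : Measure Ω) [IsProbabilityMeasure P]
    (X : Ω → ℝ) (hX : Measurable X) (hX0 : ∀ ω, 0 ≤ X ω)
    (γ α : ℝ) (h0γ : 0 < γ) (hγα : γ < α)
    (κ T : ℝ) (hκ : 0 < κ)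
    (hliminf : ∀ t : ℝ, T ≤ t → κ ≤ t ^ (-γ) * ∫ ω in {ω | X ω ≤ t}, X ω ^ α ∂P) :
    ∃ C > (0 : ℝ), ∃ t₀ > (0 : ℝ), ∀ t : ℝ, t₀ ≤ t →
      ENNReal.ofReal (C * t ^ (-(α / γ) * (α - γ))) ≤ P {ω | t ≤ X ω} :=
  stmt_14_general (.of_forall hX0) (h0γ.trans hγα) h0γ hκ hliminf
end
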